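/- arXiv:2310.16228 — 5 statements merged into one kernel-verified Lean document; each statement's English description precedes it below -/
import Mathlib

section
/- Let v = (a₁μ₁, a₂μ₂) ∈ ℝ² with v ≠ 0, let p = ½·δ_v + ½·δ_{−v}, and let k be the approximate ReLU kernel with a* = 815/3072. Define φ₁(x) := (‖x‖ / (2‖v‖)) · (1 + ⟨x/‖x‖, v/‖v‖⟩²). Then φ₁ is a normalized eigenfunction of the kernel operator with eigenvalue 2·a*·‖v‖²: for every x ∈ ℝ², ∫ k(x, z) · φ₁(z) dp(z) = 2·a*·‖v‖² · φ₁(x), and moreover ∫ φ₁(z)² dp(z) = 1. -/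
open MeasureTheory RealInnerProductSpace
open scoped ENNReal

/-!
Adding the values of the kernel at `z` and at `-z` cancels the cross term of
`(1 ± ⟪x/‖x‖, z/‖z‖⟫)²` and leaves a multiple of the function `x ↦ ‖x‖ (1 + ⟪x/‖x‖, z/‖z‖⟫²)`.
So the kernel operator of the uniform measure on `{v, -v}` sends every even function to a multiple
of this function for `z = v`; dividing it by its common value at `±v` gives it `L²` norm `1`.
-/

/-- The approximate ReLU kernel with coefficient `a`; the paper's `a*` is `a = 815/3072`.
Mathlib's `normalize` is `0` at `0`, as in the paper's convention. -/
noncomputable def approxReluKernel {E : Type*} [NormedAddCommGroup E] [InnerProductSpace ℝ E]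
    (a : ℝ) (x z : E) : ℝ :=
  a * ‖x‖ * ‖z‖ * (1 + ⟪NormedSpace.normalize x, NormedSpace.normalize z⟫) ^ 2

/-- The eigenfunction `φ₁` of the approximate ReLU kernel for the uniform measure on `{v, -v}`,
normalized to take the value `1` at `v` when `v ≠ 0`. -/
noncomputable def reluEigenfunction {E : Type*} [NormedAddCommGroup E] [InnerProductSpace ℝ E]
    (v x : E) : ℝ :=
  ‖x‖ / (2 * ‖v‖) * (1 + ⟪NormedSpace.normalize x, NormedSpace.normalize v⟫ ^ 2)

/-- The uniform probability measure on the pair `{v, -v}`, which is the Dirac mass at `v` when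
`v = -v`; it is the small-covariance limit `p` of the paper's Gaussian mixture. -/
noncomputable def symmetricDirac {α : Type*} [MeasurableSpace α] [Neg α] (v : α) : Measure α :=
  (1 / 2 : ℝ≥0∞) • Measure.dirac v + (1 / 2 : ℝ≥0∞) • Measure.dirac (-v)

theorem integral_symmetricDirac {α F : Type*} [MeasurableSpace α] [MeasurableSingletonClass α]
    [Neg α] [NormedAddCommGroup F] [NormedSpace ℝ F] [CompleteSpace F] (v : α) (f : α → F) :
    ∫ z, f z ∂symmetricDirac v = (1 / 2 : ℝ) • (f v + f (-v)) := by
  have integrable_half_dirac (w : α) : Integrable f ((1 / 2 : ℝ≥0∞) • Measure.dirac w) :=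
    (integrable_dirac enorm_lt_top).smul_measure (by simp)
  rw [symmetricDirac,
    integral_add_measure (integrable_half_dirac v) (integrable_half_dirac (-v))]
  simp only [integral_smul_measure, integral_dirac, ENNReal.toReal_div, ENNReal.toReal_one,
    ENNReal.toReal_ofNat, smul_add]

section InnerProductSpace

variable {E : Type*} [NormedAddCommGroup E] [InnerProductSpace ℝ E]

theorem approxReluKernel_add_approxReluKernel_neg (a : ℝ) (x z : E) :
    approxReluKernel a x z + approxReluKernel a x (-z) =
      4 * a * ‖z‖ ^ 2 * reluEigenfunction z x := by
  obtain rfl | hz := eq_or_ne z 0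
  · simp [approxReluKernel]
  · have hz_norm : ‖z‖ ≠ 0 := norm_ne_zero_iff.mpr hz
    simp only [approxReluKernel, reluEigenfunction, norm_neg, NormedSpace.normalize_neg,
      inner_neg_right]
    field_simp
    ring

theorem reluEigenfunction_neg (v x : E) : reluEigenfunction v (-x) = reluEigenfunction v x := by
  simp only [reluEigenfunction, norm_neg, NormedSpace.normalize_neg, inner_neg_left, neg_sq]

theorem reluEigenfunction_self {v : E} (hv : v ≠ 0) : reluEigenfunction v v = 1 := by
  have hv_norm : ‖v‖ ≠ 0 := norm_ne_zero_iff.mpr hv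
  have inner_normalize_self : ⟪NormedSpace.normalize v, NormedSpace.normalize v⟫ = 1 := by
    rw [real_inner_self_eq_norm_sq, NormedSpace.norm_normalize_eq_one_iff.mpr hv, one_pow]
  rw [reluEigenfunction, inner_normalize_self]
  field_simp
  norm_num

variable [MeasurableSpace E] [MeasurableSingletonClass E]

theorem integral_approxReluKernel_mul_of_even (a : ℝ) (v x : E) {f : E → ℝ} (hf : f.Even) :
    ∫ z, approxReluKernel a x z * f z ∂symmetricDirac v =
      2 * a * ‖v‖ ^ 2 * f v * reluEigenfunction v x := by
  calc
    _ = 1 / 2 * (approxReluKernel a x v + approxReluKernel a x (-v)) * f v := by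
      rw [integral_symmetricDirac, hf v, smul_eq_mul]
      ring
    _ = 2 * a * ‖v‖ ^ 2 * f v * reluEigenfunction v x := by
      rw [approxReluKernel_add_approxReluKernel_neg]
      ring

theorem integral_reluEigenfunction_sq {v : E} (hv : v ≠ 0) :
    ∫ z, reluEigenfunction v z ^ 2 ∂symmetricDirac v = 1 := by
  rw [integral_symmetricDirac, reluEigenfunction_neg, reluEigenfunction_self hv]
  norm_num

theorem relu_kernel_eigenfunction_one_general (a : ℝ) {v : E} (hv : v ≠ 0) :
    (∀ x, ∫ z, approxReluKernel a x z * reluEigenfunction v z ∂symmetricDirac v =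
      2 * a * ‖v‖ ^ 2 * reluEigenfunction v x) ∧
      ∫ z, reluEigenfunction v z ^ 2 ∂symmetricDirac v = 1 := by
  refine ⟨fun x ↦ ?_, integral_reluEigenfunction_sq hv⟩
  rw [integral_approxReluKernel_mul_of_even a v x (reluEigenfunction_neg v),
    reluEigenfunction_self hv, mul_one]

end InnerProductSpace

/-- **First eigenfunction of the approximate ReLU kernel.** With
`v = (a₁μ₁, a₂μ₂) ≠ 0`, `p = ½·δ_v + ½·δ_{-v}`, `a* = 815/3072` and
`k(x,z) = a*‖x‖‖z‖(1 + ⟨x/‖x‖, z/‖z‖⟩)²` (with `x/‖x‖ := 0` for `x = 0`),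
`φ₁(x) = (‖x‖/(2‖v‖))(1 + ⟨x/‖x‖, v/‖v‖⟩²)` is a normalized eigenfunction
with eigenvalue `2·a*·‖v‖²`. -/
theorem relu_kernel_eigenfunction_one
    (a₁ a₂ μ₁ μ₂ : ℝ) (ha₁ : 0 < a₁) (ha₂ : 0 < a₂)
    (v : EuclideanSpace ℝ (Fin 2))
    (hv : v = (WithLp.equiv 2 (Fin 2 → ℝ)).symm ![a₁ * μ₁, a₂ * μ₂])
    (hvne : v ≠ 0)
    (p : Measure (EuclideanSpace ℝ (Fin 2)))
    (hp : p = (1/2 : ℝ≥0∞) • Measure.dirac v + (1/2 : ℝ≥0∞) • Measure.dirac (-v))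
    (k : EuclideanSpace ℝ (Fin 2) → EuclideanSpace ℝ (Fin 2) → ℝ)
    (hk : ∀ x z, k x z =
      (815/3072 : ℝ) * ‖x‖ * ‖z‖ * (1 + ⟪‖x‖⁻¹ • x, ‖z‖⁻¹ • z⟫) ^ 2)
    (φ₁ : EuclideanSpace ℝ (Fin 2) → ℝ)
    (hφ₁ : ∀ x, φ₁ x = (‖x‖ / (2 * ‖v‖)) * (1 + ⟪‖x‖⁻¹ • x, ‖v‖⁻¹ • v⟫ ^ 2)) :
    (∀ x, ∫ z, k x z * φ₁ z ∂p = 2 * (815/3072 : ℝ) * ‖v‖ ^ 2 * φ₁ x) ∧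
      (∫ z, (φ₁ z) ^ 2 ∂p) = 1 := by
  obtain ⟨rfl, rfl⟩ : k = approxReluKernel _ ∧ φ₁ = reluEigenfunction v := ⟨funext₂ hk, funext hφ₁⟩
  exact hp ▸ relu_kernel_eigenfunction_one_general _ hvne
end

section
/- Let v = (a₁μ₁, a₂μ₂) ∈ ℝ² with v ≠ 0, let p = ½·δ_v + ½·δ_{−v}, and let k be the approximate ReLU kernel with a* = 815/3072. Define φ₂(x) := ⟨x, v⟩ / ‖v‖². Then φ₂ is a normalized eigenfunction of the kernel operator with eigenvalue 2·a*·‖v‖²: for every x ∈ ℝ², ∫ k(x, z) · φ₂(z) dp(z) = 2·a*·‖v‖² · φ₂(x), and moreover ∫ φ₂(z)² dp(z) = 1. -/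
open MeasureTheory RealInnerProductSpace
open scoped ENNReal

/-! Integrating `k(x, ·)` times an odd function against `½ δ_v + ½ δ_{-v}` retains only the odd part
of `k(x, ·)`. For a kernel `‖x‖ ‖z‖ g(⟪x/‖x‖, z/‖z‖⟫)` whose profile `g` has odd part `t ↦ b t`, the
norms cancel and that odd part is the linear function `b ⟪x, ·⟫`, so the operator sends `φ₂` to
`b ⟪·, v⟫ = b ‖v‖² φ₂`. The profile `a (1 + t)²` has odd part `t ↦ 2 a t`. -/

section SymmDirac

variable {X : Type*} [Neg X] [MeasurableSpace X]

/-- The probability measure `½ δ_v + ½ δ_{-v}`, the law of `v` with a uniformly random sign. -/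
noncomputable def symmDirac (v : X) : Measure X :=
  (1 / 2 : ℝ≥0∞) • Measure.dirac v + (1 / 2 : ℝ≥0∞) • Measure.dirac (-v)

variable [MeasurableSingletonClass X]

theorem integral_symmDirac {F : Type*} [NormedAddCommGroup F] [NormedSpace ℝ F]
    [CompleteSpace F] (f : X → F) (v : X) :
    ∫ z, f z ∂symmDirac v = (1 / 2 : ℝ) • (f v + f (-v)) := by
  have integrable_half_dirac (w : X) :
      Integrable f ((1 / 2 : ℝ≥0∞) • Measure.dirac w) :=
    (integrable_dirac enorm_lt_top).smul_measure (by simp)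
  rw [symmDirac, integral_add_measure (integrable_half_dirac v) (integrable_half_dirac (-v))]
  simp

theorem integral_mul_symmDirac_of_odd {φ : X → ℝ} (hφ : φ.Odd) (f : X → ℝ) (v : X) :
    ∫ z, f z * φ z ∂symmDirac v = (f v - f (-v)) / 2 * φ v := by
  rw [integral_symmDirac, hφ v, smul_eq_mul]
  ring

end SymmDirac

section InnerProductSpace

variable {E : Type*} [NormedAddCommGroup E] [InnerProductSpace ℝ E]

/-- The coefficient of `v` in the orthogonal projection of `x` onto the line spanned by `v`; this
is the eigenfunction `φ₂` of the paper. -/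
noncomputable def projCoeff (v x : E) : ℝ := ⟪x, v⟫ / ‖v‖ ^ 2

theorem odd_projCoeff (v : E) : (projCoeff v).Odd := fun x ↦ by
  rw [projCoeff, projCoeff, inner_neg_left, neg_div]

theorem projCoeff_self {v : E} (hv : v ≠ 0) : projCoeff v v = 1 := by
  rw [projCoeff, real_inner_self_eq_norm_sq, div_self (pow_ne_zero 2 (norm_ne_zero_iff.mpr hv))]

theorem norm_sq_mul_projCoeff (v x : E) : ‖v‖ ^ 2 * projCoeff v x = ⟪x, v⟫ :=
  mul_div_cancel_of_imp' fun hv ↦ by simp_all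

/-- The kernel `‖x‖ ‖z‖ g(⟪x/‖x‖, z/‖z‖⟫)`, positively homogeneous of degree one in each variable,
with angular profile `g`; `NormedSpace.normalize 0 = 0` agrees with the paper's convention for
`x/‖x‖`. The approximate ReLU kernel has the profile `a* (1 + t)²`. -/
noncomputable def angularKernel (g : ℝ → ℝ) (x z : E) : ℝ :=
  ‖x‖ * ‖z‖ * g ⟪NormedSpace.normalize x, NormedSpace.normalize z⟫

theorem angularKernel_mul_one_add_sq (a : ℝ) (x z : E) :
    angularKernel (fun t ↦ a * (1 + t) ^ 2) x z =
      a * ‖x‖ * ‖z‖ * (1 + ⟪‖x‖⁻¹ • x, ‖z‖⁻¹ • z⟫) ^ 2 := by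
  rw [angularKernel, NormedSpace.normalize, NormedSpace.normalize]
  ring

theorem norm_mul_norm_mul_inner_normalize (x z : E) :
    ‖x‖ * ‖z‖ * ⟪NormedSpace.normalize x, NormedSpace.normalize z⟫ = ⟪x, z⟫ := by
  rw [mul_assoc, ← real_inner_smul_right, ← real_inner_smul_left,
    NormedSpace.norm_smul_normalize, NormedSpace.norm_smul_normalize]

theorem abs_inner_normalize_le_one (x z : E) :
    |⟪NormedSpace.normalize x, NormedSpace.normalize z⟫| ≤ 1 := by
  rw [NormedSpace.normalize, NormedSpace.normalize, real_inner_smul_left, real_inner_smul_right]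
  convert abs_real_inner_div_norm_mul_norm_le_one x z using 2
  ring

theorem angularKernel_sub_angularKernel_neg {g : ℝ → ℝ} {b : ℝ}
    (hg : ∀ t, |t| ≤ 1 → g t - g (-t) = 2 * b * t) (x z : E) :
    angularKernel g x z - angularKernel g x (-z) = 2 * b * ⟪x, z⟫ := by
  rw [angularKernel, angularKernel, norm_neg, NormedSpace.normalize_neg, inner_neg_right,
    ← mul_sub, hg _ (abs_inner_normalize_le_one x z), mul_left_comm,
    norm_mul_norm_mul_inner_normalize]

variable [MeasurableSpace E] [MeasurableSingletonClass E]

theorem integral_angularKernel_mul_projCoeff {g : ℝ → ℝ} {b : ℝ}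
    (hg : ∀ t, |t| ≤ 1 → g t - g (-t) = 2 * b * t) {v : E} (hv : v ≠ 0) (x : E) :
    ∫ z, angularKernel g x z * projCoeff v z ∂symmDirac v = b * ‖v‖ ^ 2 * projCoeff v x :=
  calc ∫ z, angularKernel g x z * projCoeff v z ∂symmDirac v
      = (angularKernel g x v - angularKernel g x (-v)) / 2 * projCoeff v v :=
        integral_mul_symmDirac_of_odd (odd_projCoeff v) _ v
    _ = b * ⟪x, v⟫ := by
        rw [angularKernel_sub_angularKernel_neg hg, projCoeff_self hv]
        ring
    _ = b * ‖v‖ ^ 2 * projCoeff v x := by rw [mul_assoc, norm_sq_mul_projCoeff]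

theorem integral_projCoeff_sq {v : E} (hv : v ≠ 0) : ∫ z, projCoeff v z ^ 2 ∂symmDirac v = 1 := by
  rw [integral_symmDirac, odd_projCoeff v v, projCoeff_self hv]
  norm_num

theorem relu_kernel_eigenfunction_two_general {g : ℝ → ℝ} {b : ℝ}
    (hg : ∀ t, |t| ≤ 1 → g t - g (-t) = 2 * b * t) {v : E} (hv : v ≠ 0) :
    (∀ x, ∫ z, angularKernel g x z * projCoeff v z ∂symmDirac v
      = b * ‖v‖ ^ 2 * projCoeff v x) ∧
      ∫ z, projCoeff v z ^ 2 ∂symmDirac v = 1 :=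
  ⟨integral_angularKernel_mul_projCoeff hg hv, integral_projCoeff_sq hv⟩

end InnerProductSpace

/-- **Second eigenfunction of the approximate ReLU kernel.** With
`v = (a₁μ₁, a₂μ₂) ≠ 0`, `p = ½·δ_v + ½·δ_{-v}`, `a* = 815/3072` and
`k(x,z) = a*‖x‖‖z‖(1 + ⟨x/‖x‖, z/‖z‖⟩)²` (with `x/‖x‖ := 0` for `x = 0`),
`φ₂(x) = ⟨x, v⟩/‖v‖²` is a normalized eigenfunction with eigenvalue
`2·a*·‖v‖²`. -/
theorem relu_kernel_eigenfunction_two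
    (a₁ a₂ μ₁ μ₂ : ℝ) (ha₁ : 0 < a₁) (ha₂ : 0 < a₂)
    (v : EuclideanSpace ℝ (Fin 2))
    (hv : v = (WithLp.equiv 2 (Fin 2 → ℝ)).symm ![a₁ * μ₁, a₂ * μ₂])
    (hvne : v ≠ 0)
    (p : Measure (EuclideanSpace ℝ (Fin 2)))
    (hp : p = (1/2 : ℝ≥0∞) • Measure.dirac v + (1/2 : ℝ≥0∞) • Measure.dirac (-v))
    (k : EuclideanSpace ℝ (Fin 2) → EuclideanSpace ℝ (Fin 2) → ℝ)
    (hk : ∀ x z, k x z =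
      (815/3072 : ℝ) * ‖x‖ * ‖z‖ * (1 + ⟪‖x‖⁻¹ • x, ‖z‖⁻¹ • z⟫) ^ 2)
    (φ₂ : EuclideanSpace ℝ (Fin 2) → ℝ)
    (hφ₂ : ∀ x, φ₂ x = ⟪x, v⟫ / ‖v‖ ^ 2) :
    (∀ x, ∫ z, k x z * φ₂ z ∂p = 2 * (815/3072 : ℝ) * ‖v‖ ^ 2 * φ₂ x) ∧
      (∫ z, (φ₂ z) ^ 2 ∂p) = 1 := by
  obtain rfl : k = angularKernel (fun t ↦ 815 / 3072 * (1 + t) ^ 2) :=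
    funext₂ fun x z ↦ (hk x z).trans (angularKernel_mul_one_add_sq _ x z).symm
  obtain rfl : φ₂ = projCoeff v := funext hφ₂
  exact hp ▸ relu_kernel_eigenfunction_two_general (fun t _ ↦ by ring) hvne
end

section
/- Let h(u) := (1/π)·(u·(π − arccos(u)) + √(1 − u²)). Then for every a ∈ ℝ, ∫_{−1}^{1} (h(u) − a·(1+u)²)² du = 1/3 − (163/48)·a + (32/5)·a² + 32/(27·π²). -/
/-!
Write `h` for the profile. On `(-1, 1)` its first derivative is the degree-zero arc-cosine kernel
`(π - arccos u) / π` and its second derivative is the arcsine density `1 / (π √(1 - u²))`. Two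
integrations by parts therefore turn `∫ f'' h` into boundary terms and the mean of `f (cos θ)` over
`θ ∈ [0, π]`, which is a Wallis integral for `f'' u = (1 + u)²`. For `∫ h²`, integration by parts
combined with `u h' = h - √(1 - u²) / π` gives `3 ∫ h² = 1 + (2 / π) ∫ h √(1 - u²)`.
-/

section ArcCosKernel

open Real Set intervalIntegral Polynomial.Chebyshev
open MeasureTheory (volume)
open scoped Interval

/-- The arc-cosine kernel of degree zero, as a function of the cosine `u` of the angle between the
two inputs: it is the derivative of `arcCosKernel₁`. -/
noncomputable def arcCosKernel₀ (u : ℝ) : ℝ := (π - arccos u) / π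

/-- The arc-cosine kernel of degree one, i.e. the ReLU profile, as a function of the cosine `u` of
the angle between the two inputs, normalized to take the value `1` at `u = 1`. -/
noncomputable def arcCosKernel₁ (u : ℝ) : ℝ := u * arcCosKernel₀ u + √(1 - u ^ 2) / π

theorem arcCosKernel₀_neg_one : arcCosKernel₀ (-1) = 0 := by
  simp [arcCosKernel₀]

theorem arcCosKernel₀_one : arcCosKernel₀ 1 = 1 := by
  simp [arcCosKernel₀, pi_ne_zero]

theorem arcCosKernel₁_neg_one : arcCosKernel₁ (-1) = 0 := by
  simp [arcCosKernel₁, arcCosKernel₀_neg_one]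

theorem arcCosKernel₁_one : arcCosKernel₁ 1 = 1 := by
  simp [arcCosKernel₁, arcCosKernel₀_one]

@[fun_prop]
theorem continuous_arcCosKernel₀ : Continuous arcCosKernel₀ := by
  unfold arcCosKernel₀
  fun_prop

@[fun_prop]
theorem continuous_arcCosKernel₁ : Continuous arcCosKernel₁ := by
  unfold arcCosKernel₁
  fun_prop

theorem hasDerivAt_sqrt_one_sub_sq {u : ℝ} (hu : u ∈ Ioo (-1) 1) :
    HasDerivAt (fun x ↦ √(1 - x ^ 2)) (-u / √(1 - u ^ 2)) u := by
  have hpos : 0 < 1 - u ^ 2 := by nlinarith [hu.1, hu.2]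
  refine (((hasDerivAt_pow 2 u).const_sub 1).sqrt hpos.ne').congr_deriv ?_
  field_simp
  norm_num

theorem hasDerivAt_sqrt_one_sub_sq_pow_three {u : ℝ} (hu : u ∈ Ioo (-1) 1) :
    HasDerivAt (fun x ↦ √(1 - x ^ 2) ^ 3) (-3 * u * √(1 - u ^ 2)) u := by
  have hpos : 0 < √(1 - u ^ 2) := sqrt_pos.mpr (by nlinarith [hu.1, hu.2])
  refine ((hasDerivAt_sqrt_one_sub_sq hu).fun_pow 3).congr_deriv ?_
  push_cast
  field_simp

theorem hasDerivAt_one_add_pow_succ_div (n : ℕ) (u : ℝ) :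
    HasDerivAt (fun x : ℝ ↦ (1 + x) ^ (n + 1) / (n + 1)) ((1 + u) ^ n) u := by
  refine ((((hasDerivAt_id' u).const_add 1).fun_pow (n + 1)).div_const (n + 1 : ℝ)).congr_deriv ?_
  push_cast
  field_simp

theorem hasDerivAt_arcCosKernel₀ {u : ℝ} (hu : u ∈ Ioo (-1) 1) :
    HasDerivAt arcCosKernel₀ (π⁻¹ * √(1 - u ^ 2)⁻¹) u := by
  refine (((hasDerivAt_arccos hu.1.ne' hu.2.ne).const_sub π).div_const π).congr_deriv ?_
  rw [sqrt_inv]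
  ring

theorem hasDerivAt_arcCosKernel₁ {u : ℝ} (hu : u ∈ Ioo (-1) 1) :
    HasDerivAt arcCosKernel₁ (arcCosKernel₀ u) u := by
  refine (((hasDerivAt_id' u).fun_mul (hasDerivAt_arcCosKernel₀ hu)).fun_add
    ((hasDerivAt_sqrt_one_sub_sq hu).div_const π)).congr_deriv ?_
  rw [sqrt_inv]
  ring

section IntegrationByParts

variable {f f' : ℝ → ℝ} (hf : ContinuousOn f (Icc (-1) 1))
  (hff' : ∀ u ∈ Ioo (-1) 1, HasDerivAt f (f' u) u) (hf' : IntervalIntegrable f' volume (-1) 1)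
include hf hff' hf'

theorem integral_deriv_mul_arcCosKernel₁ :
    ∫ u in -1..1, f' u * arcCosKernel₁ u = f 1 - ∫ u in -1..1, f u * arcCosKernel₀ u := by
  have parts := integral_mul_deriv_eq_deriv_mul_of_hasDerivAt
    continuous_arcCosKernel₁.continuousOn (by simpa using hf)
    (fun u hu ↦ hasDerivAt_arcCosKernel₁ (by simpa using hu))
    (fun u hu ↦ hff' u (by simpa using hu))
    (continuous_arcCosKernel₀.intervalIntegrable _ _) hf'
  simpa only [arcCosKernel₁_one, arcCosKernel₁_neg_one, one_mul, zero_mul, sub_zero,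
    mul_comm] using parts

theorem integral_deriv_mul_arcCosKernel₀ :
    ∫ u in -1..1, f' u * arcCosKernel₀ u = f 1 - π⁻¹ * ∫ θ in 0..π, f (cos θ) := by
  have parts := integral_mul_deriv_eq_deriv_mul_of_hasDerivAt
    continuous_arcCosKernel₀.continuousOn (by simpa using hf)
    (fun u hu ↦ hasDerivAt_arcCosKernel₀ (by simpa using hu))
    (fun u hu ↦ hff' u (by simpa using hu))
    (intervalIntegrable_sqrt_one_sub_sq_inv.const_mul _) hf'
  have arcsine : ∫ u in -1..1, π⁻¹ * √(1 - u ^ 2)⁻¹ * f u = π⁻¹ * ∫ θ in 0..π, f (cos θ) := by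
    rw [← integral_measureT_eq_integral_cos, integral_measureT, ← integral_const_mul]
    simp only [mul_comm, mul_left_comm]
  simpa only [arcsine, arcCosKernel₀_one, arcCosKernel₀_neg_one, one_mul, zero_mul, sub_zero,
    mul_comm (arcCosKernel₀ _)] using parts

end IntegrationByParts

theorem integral_one_add_cos_pow (n : ℕ) :
    ∫ θ in 0..π, (1 + cos θ) ^ n =
      2 ^ n * π * ∏ i ∈ Finset.range n, (2 * (i : ℝ) + 1) / (2 * i + 2) := by
  have half_angle (θ : ℝ) : (1 + cos θ) ^ n = 2 ^ n * cos (θ / 2) ^ (2 * n) := by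
    rw [pow_mul, ← mul_pow, cos_sq, mul_div_cancel₀ θ two_ne_zero]
    ring
  calc ∫ θ in 0..π, (1 + cos θ) ^ n
      = 2 ^ n * (2 * ∫ x in 0..π / 2, cos x ^ (2 * n)) := by
        simp only [half_angle, integral_const_mul]
        rw [integral_comp_div (fun x ↦ cos x ^ (2 * n)) two_ne_zero, zero_div, smul_eq_mul]
    _ = 2 ^ n * ∫ x in 0..π, sin x ^ (2 * n) := by
        rw [EulerSine.integral_cos_pow_eq]
        ring
    _ = _ := by rw [integral_sin_pow_even, mul_assoc]

theorem integral_one_add_pow_mul_arcCosKernel₀ (n : ℕ) :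
    ∫ u in -1..1, (1 + u) ^ n * arcCosKernel₀ u =
      2 ^ (n + 1) / (n + 1) *
        (1 - ∏ i ∈ Finset.range (n + 1), (2 * (i : ℝ) + 1) / (2 * i + 2)) := by
  rw [integral_deriv_mul_arcCosKernel₀ (f := fun u ↦ (1 + u) ^ (n + 1) / (n + 1)) (by fun_prop)
    (fun u _ ↦ hasDerivAt_one_add_pow_succ_div n u)
    (Continuous.intervalIntegrable (by fun_prop) _ _),
    integral_div, integral_one_add_cos_pow, one_add_one_eq_two]
  field_simp

theorem integral_one_add_pow_mul_arcCosKernel₁ (n : ℕ) :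
    ∫ u in -1..1, (1 + u) ^ n * arcCosKernel₁ u =
      2 ^ (n + 1) / ((n + 1) * (n + 2)) *
        (n + 2 * ∏ i ∈ Finset.range (n + 2), (2 * (i : ℝ) + 1) / (2 * i + 2)) := by
  rw [integral_deriv_mul_arcCosKernel₁ (f := fun u ↦ (1 + u) ^ (n + 1) / (n + 1)) (by fun_prop)
    (fun u _ ↦ hasDerivAt_one_add_pow_succ_div n u)
    (Continuous.intervalIntegrable (by fun_prop) _ _)]
  simp only [div_mul_eq_mul_div, integral_div, integral_one_add_pow_mul_arcCosKernel₀,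
    one_add_one_eq_two]
  push_cast
  field_simp
  ring

theorem integral_mul_sqrt_one_sub_sq_mul_arcCosKernel₀ :
    ∫ u in -1..1, u * √(1 - u ^ 2) * arcCosKernel₀ u = 4 / (9 * π) := by
  have sin_cubed : ∫ θ in 0..π, √(1 - cos θ ^ 2) ^ 3 = 4 / 3 := by
    calc ∫ θ in 0..π, √(1 - cos θ ^ 2) ^ 3
        = ∫ θ in 0..π, sin θ ^ 3 := integral_congr fun θ hθ ↦ by
          rw [uIcc_of_le pi_pos.le] at hθ
          simp only [← sin_eq_sqrt_one_sub_cos_sq hθ.1 hθ.2]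
      _ = 4 / 3 := by
          rw [integral_sin_pow_three, cos_zero, cos_pi]
          norm_num
  rw [integral_deriv_mul_arcCosKernel₀ (f := fun u ↦ √(1 - u ^ 2) ^ 3 / (-3)) (by fun_prop)
    (fun u hu ↦ ((hasDerivAt_sqrt_one_sub_sq_pow_three hu).div_const (-3)).congr_deriv (by ring))
    (Continuous.intervalIntegrable (by fun_prop) _ _), integral_div, sin_cubed]
  norm_num
  field_simp

theorem integral_arcCosKernel₁_mul_sqrt_one_sub_sq :
    ∫ u in -1..1, arcCosKernel₁ u * √(1 - u ^ 2) = 16 / (9 * π) := by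
  have expand : EqOn (fun u ↦ arcCosKernel₁ u * √(1 - u ^ 2))
      (fun u ↦ u * √(1 - u ^ 2) * arcCosKernel₀ u + (1 - u ^ 2) / π) [[-1, 1]] := fun u hu ↦ by
    rw [uIcc_of_le (by norm_num)] at hu
    have sq_sqrt_eq : √(1 - u ^ 2) ^ 2 = 1 - u ^ 2 := sq_sqrt (by nlinarith [hu.1, hu.2])
    simp only [arcCosKernel₁]
    linear_combination sq_sqrt_eq / π
  have parabola : ∫ u in (-1 : ℝ)..1, (1 - u ^ 2) = 4 / 3 := by
    norm_num [integral_pow]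
  rw [integral_congr expand, integral_add (Continuous.intervalIntegrable (by fun_prop) _ _)
    (Continuous.intervalIntegrable (by fun_prop) _ _),
    integral_mul_sqrt_one_sub_sq_mul_arcCosKernel₀, integral_div, parabola]
  field_simp
  norm_num

theorem integral_arcCosKernel₁_sq :
    ∫ u in -1..1, arcCosKernel₁ u ^ 2 = 1 / 3 + 32 / (27 * π ^ 2) := by
  set I := ∫ u in -1..1, arcCosKernel₁ u ^ 2
  have self_sub_sqrt (c : ℝ) :
      ∫ u in -1..1, (c * arcCosKernel₁ u ^ 2 - arcCosKernel₁ u * √(1 - u ^ 2) / π) =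
        c * I - 16 / (9 * π) / π := by
    rw [integral_sub (Continuous.intervalIntegrable (by fun_prop) _ _)
      (Continuous.intervalIntegrable (by fun_prop) _ _), integral_const_mul, integral_div,
      integral_arcCosKernel₁_mul_sqrt_one_sub_sq]
  have parts := integral_deriv_mul_arcCosKernel₁ (f := fun u ↦ u * arcCosKernel₁ u)
    (f' := fun u ↦ arcCosKernel₁ u + u * arcCosKernel₀ u) (by fun_prop)
    (fun u hu ↦ ((hasDerivAt_id' u).fun_mul (hasDerivAt_arcCosKernel₁ hu)).congr_deriv (by ring))
    (Continuous.intervalIntegrable (by fun_prop) _ _)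
  have mul_kernel₀ (u : ℝ) : u * arcCosKernel₀ u = arcCosKernel₁ u - √(1 - u ^ 2) / π := by
    simp only [arcCosKernel₁, add_sub_cancel_right]
  have lhs_integrand (u : ℝ) : (arcCosKernel₁ u + u * arcCosKernel₀ u) * arcCosKernel₁ u =
      2 * arcCosKernel₁ u ^ 2 - arcCosKernel₁ u * √(1 - u ^ 2) / π := by
    rw [mul_kernel₀]
    ring
  have rhs_integrand (u : ℝ) : u * arcCosKernel₁ u * arcCosKernel₀ u =
      1 * arcCosKernel₁ u ^ 2 - arcCosKernel₁ u * √(1 - u ^ 2) / π := by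
    rw [mul_right_comm, mul_kernel₀]
    ring
  simp only [lhs_integrand, rhs_integrand, self_sub_sqrt, arcCosKernel₁_one] at parts
  linear_combination (norm := (field_simp; ring)) parts / 3

end ArcCosKernel

/-- **Closed form of the quadratic-approximation error.** For the arc-cosine
kernel profile `h(u) = (1/π)(u(π − arccos u) + √(1 − u²))` and any `a ∈ ℝ`,
`∫_{−1}^{1} (h(u) − a(1+u)²)² du = 1/3 − (163/48)a + (32/5)a² + 32/(27π²)`. -/
theorem relu_profile_quadratic_error
    (h : ℝ → ℝ)
    (hh : ∀ u, h u = (1 / Real.pi) *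
      (u * (Real.pi - Real.arccos u) + Real.sqrt (1 - u ^ 2)))
    (a : ℝ) :
    (∫ u in (-1 : ℝ)..1, (h u - a * (1 + u) ^ 2) ^ 2) =
      1/3 - (163/48) * a + (32/5) * a ^ 2 + 32 / (27 * Real.pi ^ 2) := by
  obtain rfl : h = arcCosKernel₁ := funext fun u ↦ by
    rw [hh, arcCosKernel₁, arcCosKernel₀]
    ring
  have quadratic_moment : ∫ u in (-1 : ℝ)..1, (1 + u) ^ 2 * arcCosKernel₁ u = 163 / 96 := by
    rw [integral_one_add_pow_mul_arcCosKernel₁]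
    norm_num [Finset.prod_range_succ]
  have quartic : ∫ u in (-1 : ℝ)..1, (1 + u) ^ 4 = 32 / 5 := by
    rw [intervalIntegral.integral_comp_add_left (fun x ↦ x ^ 4), integral_pow]
    norm_num
  have expand (u : ℝ) : (arcCosKernel₁ u - a * (1 + u) ^ 2) ^ 2 =
      arcCosKernel₁ u ^ 2 - 2 * a * ((1 + u) ^ 2 * arcCosKernel₁ u) + a ^ 2 * (1 + u) ^ 4 := by
    ring
  simp only [expand]
  rw [intervalIntegral.integral_add (Continuous.intervalIntegrable (by fun_prop) _ _)
    (Continuous.intervalIntegrable (by fun_prop) _ _),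
    intervalIntegral.integral_sub (Continuous.intervalIntegrable (by fun_prop) _ _)
    (Continuous.intervalIntegrable (by fun_prop) _ _),
    intervalIntegral.integral_const_mul, intervalIntegral.integral_const_mul,
    integral_arcCosKernel₁_sq, quadratic_moment, quartic]
  ring
end

section
/- Let v = (a₁μ₁, a₂μ₂) ∈ ℝ² with v ≠ 0 and p = ½·δ_v + ½·δ_{−v}. Define φ(x) := ⟨v, x⟩/‖v‖², f(x) := ½·φ(x)·φ(v), and for b = (b₁, b₂) ∈ ℝ² let B·v := (b₁a₁μ₁, b₂a₂μ₂) and g_b(x) := ½·φ(x)·φ(B·v), and set γ(b) := (∫ f·g_b dp) / (√(∫ f² dp) · √(∫ g_b² dp)). Then for every b with b₁·a₁²μ₁² + b₂·a₂²μ₂² ≠ 0, γ(b) = sign(b₁·a₁²μ₁² + b₂·a₂²μ₂²). -/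
open MeasureTheory RealInnerProductSpace
open scoped ENNReal

/-!
Since `φ v = 1`, the prediction `g_b` is the scalar multiple `φ(B·v) • f` of `f`. The normalized
alignment of a function with a nonzero multiple of itself is the sign of the factor, and `φ(B·v)`
has the sign of `⟪v, B·v⟫`, which is the stated weighted sum of squares.
-/

section NormalizedAlignment

variable {α : Type*} [MeasurableSpace α]

/-- The cosine of the angle between square-integrable `f` and `g` in `L²(μ)`, the quantity `γ` of
the paper. It is defined for plain functions rather than `L²` classes, and is `0` when the
denominator vanishes. -/
noncomputable def normalizedAlignment (μ : Measure α) (f g : α → ℝ) : ℝ :=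
  (∫ x, f x * g x ∂μ) / (√(∫ x, f x ^ 2 ∂μ) * √(∫ x, g x ^ 2 ∂μ))

variable {μ : Measure α} {f : α → ℝ} {c : ℝ}

theorem normalizedAlignment_self (hf : ∫ x, f x ^ 2 ∂μ ≠ 0) : normalizedAlignment μ f f = 1 := by
  have hnonneg : 0 ≤ ∫ x, f x ^ 2 ∂μ := integral_nonneg fun x ↦ sq_nonneg (f x)
  simp only [normalizedAlignment, ← sq]
  rw [Real.sq_sqrt hnonneg, div_self hf]

theorem normalizedAlignment_neg_right (μ : Measure α) (f g : α → ℝ) :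
    normalizedAlignment μ f (fun x ↦ -g x) = -normalizedAlignment μ f g := by
  simp only [normalizedAlignment, mul_neg, neg_sq, integral_neg, neg_div]

theorem normalizedAlignment_const_mul_right_of_pos (μ : Measure α) (f g : α → ℝ) (hc : 0 < c) :
    normalizedAlignment μ f (fun x ↦ c * g x) = normalizedAlignment μ f g := by
  simp only [normalizedAlignment, mul_left_comm _ c, mul_pow, integral_const_mul]
  rw [Real.sqrt_mul (sq_nonneg c), Real.sqrt_sq hc.le, mul_left_comm,
    mul_div_mul_left _ _ hc.ne']

theorem normalizedAlignment_const_mul_self (hf : ∫ x, f x ^ 2 ∂μ ≠ 0) (hc : c ≠ 0) :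
    normalizedAlignment μ f (fun x ↦ c * f x) = Real.sign c := by
  rcases hc.lt_or_gt with hneg | hpos
  · calc normalizedAlignment μ f (fun x ↦ c * f x)
        = normalizedAlignment μ f (fun x ↦ -(-c * f x)) := by simp only [neg_mul, neg_neg]
      _ = -normalizedAlignment μ f f := by
        rw [normalizedAlignment_neg_right,
          normalizedAlignment_const_mul_right_of_pos _ _ _ (neg_pos.2 hneg)]
      _ = Real.sign c := by rw [normalizedAlignment_self hf, Real.sign_of_neg hneg]
  · rw [normalizedAlignment_const_mul_right_of_pos _ _ _ hpos, normalizedAlignment_self hf,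
      Real.sign_of_pos hpos]

end NormalizedAlignment

theorem integral_smul_dirac_add_smul_dirac {α F : Type*} [MeasurableSpace α]
    [MeasurableSingletonClass α] [NormedAddCommGroup F] [NormedSpace ℝ F] [CompleteSpace F]
    {c d : ℝ≥0∞} (hc : c ≠ ∞) (hd : d ≠ ∞) (h : α → F) (x y : α) :
    ∫ z, h z ∂(c • Measure.dirac x + d • Measure.dirac y) = c.toReal • h x + d.toReal • h y := by
  have hx : Integrable h (c • Measure.dirac x) :=
    (integrable_dirac enorm_lt_top).smul_measure hc
  have hy : Integrable h (d • Measure.dirac y) :=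
    (integrable_dirac enorm_lt_top).smul_measure hd
  simp only [integral_add_measure hx hy, integral_smul_measure, integral_dirac]

theorem real_sign_div_of_pos (x : ℝ) {y : ℝ} (hy : 0 < y) : Real.sign (x / y) = Real.sign x := by
  rcases lt_trichotomy x 0 with hneg | rfl | hpos
  · rw [Real.sign_of_neg hneg, Real.sign_of_neg (div_neg_of_neg_of_pos hneg hy)]
  · rw [zero_div]
  · rw [Real.sign_of_pos hpos, Real.sign_of_pos (div_pos hpos hy)]

section LinearKernel

variable {E : Type*} [NormedAddCommGroup E] [InnerProductSpace ℝ E]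

theorem real_inner_self_div_norm_sq {v : E} (hv : v ≠ 0) : ⟪v, v⟫ / ‖v‖ ^ 2 = 1 := by
  rw [real_inner_self_eq_norm_sq, div_self (pow_ne_zero 2 (norm_ne_zero_iff.2 hv))]

variable [MeasurableSpace E]

theorem integral_inner_div_norm_sq_sq_eq_one [MeasurableSingletonClass E] {v : E} (hv : v ≠ 0) :
    ∫ x, (⟪v, x⟫ / ‖v‖ ^ 2) ^ 2
      ∂((1 / 2 : ℝ≥0∞) • Measure.dirac v + (1 / 2 : ℝ≥0∞) • Measure.dirac (-v)) = 1 := by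
  rw [integral_smul_dirac_add_smul_dirac (by simp) (by simp), inner_neg_right, neg_div,
    real_inner_self_div_norm_sq hv]
  norm_num

theorem linear_kernel_alignment_sign_general {p : Measure E} {v w : E} {φ f g : E → ℝ}
    (hφ : ∀ x, φ x = ⟪v, x⟫ / ‖v‖ ^ 2) (hφp : ∫ x, φ x ^ 2 ∂p ≠ 0)
    (hf : ∀ x, f x = (1 / 2) * φ x * φ v) (hg : ∀ x, g x = (1 / 2) * φ x * φ w)
    (hvw : ⟪v, w⟫ ≠ 0) :
    normalizedAlignment p f g = Real.sign ⟪v, w⟫ := by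
  have hv : v ≠ 0 := fun h ↦ hvw (by rw [h, inner_zero_left])
  have hnorm : 0 < ‖v‖ ^ 2 := by positivity
  have hφv : φ v = 1 := (hφ v).trans (real_inner_self_div_norm_sq hv)
  have hgf : g = fun x ↦ φ w * f x := by
    ext x
    rw [hg, hf, hφv]
    ring
  have hfp : ∫ x, f x ^ 2 ∂p ≠ 0 := by
    simpa only [hf, hφv, mul_one, mul_pow, integral_const_mul] using
      mul_ne_zero (by norm_num) hφp
  have hφw : φ w ≠ 0 := by
    rw [hφ]
    exact div_ne_zero hvw hnorm.ne'
  rw [hgf, normalizedAlignment_const_mul_self hfp hφw, hφ, real_sign_div_of_pos _ hnorm]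

end LinearKernel

/-- **Alignment of the linear-kernel prediction under availability rescaling.**
With `v = (a₁μ₁, a₂μ₂) ≠ 0`, `p = ½·δ_v + ½·δ_{-v}`, `φ(x) = ⟨v,x⟩/‖v‖²`,
`f(x) = ½φ(x)φ(v)`, `g_b(x) = ½φ(x)φ(B·v)` with `B·v = (b₁a₁μ₁, b₂a₂μ₂)`, the
normalized alignment satisfies `γ(b) = sign(b₁a₁²μ₁² + b₂a₂²μ₂²)` whenever
that quantity is nonzero. -/
theorem linear_kernel_alignment_sign
    (a₁ a₂ μ₁ μ₂ : ℝ) (ha₁ : 0 < a₁) (ha₂ : 0 < a₂)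
    (v : EuclideanSpace ℝ (Fin 2))
    (hv : v = (WithLp.equiv 2 (Fin 2 → ℝ)).symm ![a₁ * μ₁, a₂ * μ₂])
    (hvne : v ≠ 0)
    (p : Measure (EuclideanSpace ℝ (Fin 2)))
    (hp : p = (1/2 : ℝ≥0∞) • Measure.dirac v + (1/2 : ℝ≥0∞) • Measure.dirac (-v))
    (φ : EuclideanSpace ℝ (Fin 2) → ℝ)
    (hφ : ∀ x, φ x = ⟪v, x⟫ / ‖v‖ ^ 2)
    (f : EuclideanSpace ℝ (Fin 2) → ℝ)
    (hf : ∀ x, f x = (1/2) * φ x * φ v)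
    (g : ℝ × ℝ → EuclideanSpace ℝ (Fin 2) → ℝ)
    (hg : ∀ b x, g b x = (1/2) * φ x *
      φ ((WithLp.equiv 2 (Fin 2 → ℝ)).symm ![b.1 * (a₁ * μ₁), b.2 * (a₂ * μ₂)]))
    (γ : ℝ × ℝ → ℝ)
    (hγ : ∀ b, γ b = (∫ x, f x * g b x ∂p) /
      (Real.sqrt (∫ x, (f x) ^ 2 ∂p) * Real.sqrt (∫ x, (g b x) ^ 2 ∂p))) :
    ∀ b : ℝ × ℝ, b.1 * a₁ ^ 2 * μ₁ ^ 2 + b.2 * a₂ ^ 2 * μ₂ ^ 2 ≠ 0 →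
      γ b = Real.sign (b.1 * a₁ ^ 2 * μ₁ ^ 2 + b.2 * a₂ ^ 2 * μ₂ ^ 2) := by
  intro b hb
  have hinner : ⟪v, (WithLp.equiv 2 (Fin 2 → ℝ)).symm ![b.1 * (a₁ * μ₁), b.2 * (a₂ * μ₂)]⟫ =
      b.1 * a₁ ^ 2 * μ₁ ^ 2 + b.2 * a₂ ^ 2 * μ₂ ^ 2 := by
    simp only [hv, WithLp.equiv_symm_apply, EuclideanSpace.inner_toLp_toLp, star_trivial,
      Matrix.vec2_dotProduct']
    ring
  have hφp : ∫ x, φ x ^ 2 ∂p = 1 := by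
    simp only [hφ, hp, integral_inner_div_norm_sq_sq_eq_one hvne]
  rw [← hinner] at hb ⊢
  exact (hγ b).trans
    (linear_kernel_alignment_sign_general hφ (hφp ▸ one_ne_zero) hf (hg b) hb)
end

section
/- Let v = (a₁μ₁, a₂μ₂) ∈ ℝ² with v ≠ 0 and p = ½·δ_v + ½·δ_{−v}. Define φ(x) := ⟨v, x⟩/‖v‖², f(x) := ½·φ(x)·φ(v), for b = (b₁, b₂) ∈ ℝ² let g_b(x) := ½·φ(x)·φ((b₁a₁μ₁, b₂a₂μ₂)), and γ(b) := (∫ f·g_b dp) / (√(∫ f² dp) · √(∫ g_b² dp)). Then for every integer m ≥ 1 and each i ∈ {1, 2}, the m-th partial derivative ζᵢ := (∂ᵐ/∂bᵢᵐ) γ evaluated at b = (1, 1) equals 0; in particular |ζ₁| − |ζ₂| = 0 for every m ≥ 1 and all choices of a₁, a₂. (A wide linear two-layer network is unbiased to feature availability.) -/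
open MeasureTheory RealInnerProductSpace
open scoped ENNReal
open scoped Topology

/-!
A single eigenfunction `φ` makes every prediction a multiple of `φ`, and the alignment of two
multiples of `φ` depends only on the signs of the coefficients. A small change of the features
cannot change these signs, so the alignment is locally constant and all of its derivatives vanish.
-/

/-- The normalized alignment of two functions: the cosine of their angle in `L²(p)`, with value `0`
if the square of one of them has integral `0` or is not integrable. -/
noncomputable def alignment {α : Type*} [MeasurableSpace α] (p : Measure α) (f g : α → ℝ) : ℝ :=
  (∫ x, f x * g x ∂p) / (√(∫ x, f x ^ 2 ∂p) * √(∫ x, g x ^ 2 ∂p))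

/-- The prediction function of kernel regression when `φ` is the only eigenfunction of the kernel
and the class to be predicted is concentrated at `y` with probability `1/2`: the coefficient of `φ`
is then the integral of `φ` over that class, `φ y / 2`. -/
noncomputable def rankOnePrediction {α : Type*} (φ : α → ℝ) (y x : α) : ℝ :=
  1 / 2 * φ x * φ y

/-- The eigenfunction `φ` of the linear kernel for data on the line through `v`, scaled so that
`φ v = 1` for `v ≠ 0`. -/
noncomputable def linearEigenfunction {E : Type*} [NormedAddCommGroup E] [InnerProductSpace ℝ E]
    (v x : E) : ℝ :=
  ⟪v, x⟫ / ‖v‖ ^ 2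

section Alignment

variable {α : Type*} [MeasurableSpace α] {p : Measure α} {φ : α → ℝ}

theorem alignment_smul_smul_of_mul_pos (hφ : ∫ x, φ x ^ 2 ∂p ≠ 0) {c d : ℝ} (hcd : 0 < c * d) :
    alignment p (c • φ) (d • φ) = 1 := by
  have sqrt_integral (e : ℝ) : √(∫ x, (e • φ) x ^ 2 ∂p) = |e| * √(∫ x, φ x ^ 2 ∂p) := by
    simp only [Pi.smul_apply, smul_eq_mul, mul_pow, integral_const_mul]
    rw [Real.sqrt_mul (sq_nonneg e), Real.sqrt_sq_eq_abs]
  have numerator : ∫ x, (c • φ) x * (d • φ) x ∂p = c * d * ∫ x, φ x ^ 2 ∂p := by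
    rw [← integral_const_mul]
    congr with x
    simp only [Pi.smul_apply, smul_eq_mul]
    ring
  have denominator :
      √(∫ x, (c • φ) x ^ 2 ∂p) * √(∫ x, (d • φ) x ^ 2 ∂p) = c * d * ∫ x, φ x ^ 2 ∂p := by
    rw [sqrt_integral, sqrt_integral, mul_mul_mul_comm, ← abs_mul, abs_of_pos hcd,
      Real.mul_self_sqrt (integral_nonneg fun x => sq_nonneg (φ x))]
  rw [alignment, numerator, denominator, div_self (mul_ne_zero hcd.ne' hφ)]

theorem alignment_rankOnePrediction_of_mul_pos (hφ : ∫ x, φ x ^ 2 ∂p ≠ 0) {y z : α}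
    (hyz : 0 < φ y * φ z) :
    alignment p (rankOnePrediction φ y) (rankOnePrediction φ z) = 1 := by
  have rankOnePrediction_eq_smul (w : α) : rankOnePrediction φ w = (φ w / 2) • φ := by
    ext x
    simp only [rankOnePrediction, Pi.smul_apply, smul_eq_mul]
    ring
  rw [rankOnePrediction_eq_smul, rankOnePrediction_eq_smul]
  exact alignment_smul_smul_of_mul_pos hφ (by linarith)

end Alignment

theorem iteratedDeriv_eq_zero_of_eventuallyEq_const {𝕜 F : Type*} [NontriviallyNormedField 𝕜]
    [NormedAddCommGroup F] [NormedSpace 𝕜 F] {h : 𝕜 → F} {c : F} {t₀ : 𝕜}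
    (hh : h =ᶠ[𝓝 t₀] fun _ => c) {m : ℕ} (hm : m ≠ 0) : iteratedDeriv m h t₀ = 0 := by
  rw [hh.iteratedDeriv_eq m, iteratedDeriv_const, if_neg hm]

theorem integral_half_dirac_add_half_dirac {α F : Type*} [MeasurableSpace α]
    [MeasurableSingletonClass α] [NormedAddCommGroup F] [NormedSpace ℝ F] [CompleteSpace F]
    (h : α → F) (x y : α) :
    ∫ z, h z ∂((1 / 2 : ℝ≥0∞) • Measure.dirac x + (1 / 2 : ℝ≥0∞) • Measure.dirac y) =
      (1 / 2 : ℝ) • (h x + h y) := by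
  have integrable_half_dirac (w : α) : Integrable h ((1 / 2 : ℝ≥0∞) • Measure.dirac w) :=
    (integrable_dirac enorm_lt_top).smul_measure (by simp)
  rw [integral_add_measure (integrable_half_dirac x) (integrable_half_dirac y),
    integral_smul_measure, integral_smul_measure, integral_dirac, integral_dirac, smul_add]
  simp

section LinearEigenfunction

variable {E : Type*} [NormedAddCommGroup E] [InnerProductSpace ℝ E]

theorem continuous_linearEigenfunction (v : E) : Continuous (linearEigenfunction v) := by
  unfold linearEigenfunction
  fun_prop

theorem linearEigenfunction_self {v : E} (hv : v ≠ 0) : linearEigenfunction v v = 1 := by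
  rw [linearEigenfunction, real_inner_self_eq_norm_sq,
    div_self (pow_ne_zero 2 (norm_ne_zero_iff.mpr hv))]

theorem linearEigenfunction_neg (v x : E) :
    linearEigenfunction v (-x) = -linearEigenfunction v x := by
  rw [linearEigenfunction, inner_neg_right, neg_div, linearEigenfunction]

theorem integral_linearEigenfunction_sq [MeasurableSpace E] [MeasurableSingletonClass E] {v : E}
    (hv : v ≠ 0) :
    ∫ x, linearEigenfunction v x ^ 2
      ∂((1 / 2 : ℝ≥0∞) • Measure.dirac v + (1 / 2 : ℝ≥0∞) • Measure.dirac (-v)) = 1 := by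
  rw [integral_half_dirac_add_half_dirac, linearEigenfunction_neg, linearEigenfunction_self hv]
  norm_num

end LinearEigenfunction

/- `w t` is the rescaled class centre; rescaling a single feature moves it along a line. -/
theorem linear_kernel_unbiased_sensitivity_general {α : Type*} [MeasurableSpace α]
    {p : Measure α} {φ : α → ℝ} (hφ : ∫ x, φ x ^ 2 ∂p ≠ 0) {w : ℝ → α} {t₀ : ℝ}
    (hw : ContinuousAt (fun t => φ (w t)) t₀) (hw₀ : φ (w t₀) ≠ 0) {m : ℕ} (hm : m ≠ 0) :
    iteratedDeriv m
      (fun t => alignment p (rankOnePrediction φ (w t₀)) (rankOnePrediction φ (w t))) t₀ = 0 := by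
  have same_sign : ∀ᶠ t in 𝓝 t₀, 0 < φ (w t₀) * φ (w t) :=
    (hw.const_mul (φ (w t₀))).eventually_const_lt (mul_self_pos.mpr hw₀)
  exact iteratedDeriv_eq_zero_of_eventuallyEq_const
    (same_sign.mono fun _ => alignment_rankOnePrediction_of_mul_pos hφ) hm

theorem iteratedDeriv_alignment_linearEigenfunction {E : Type*} [NormedAddCommGroup E]
    [InnerProductSpace ℝ E] [MeasurableSpace E] [MeasurableSingletonClass E] {w : ℝ → E} {t₀ : ℝ}
    (hw : ContinuousAt w t₀) (hw₀ : w t₀ ≠ 0) {m : ℕ} (hm : m ≠ 0) :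
    iteratedDeriv m (fun t => alignment
      ((1 / 2 : ℝ≥0∞) • Measure.dirac (w t₀) + (1 / 2 : ℝ≥0∞) • Measure.dirac (-w t₀))
      (rankOnePrediction (linearEigenfunction (w t₀)) (w t₀))
      (rankOnePrediction (linearEigenfunction (w t₀)) (w t))) t₀ = 0 := by
  refine linear_kernel_unbiased_sensitivity_general ?_ ?_ ?_ hm
  · rw [integral_linearEigenfunction_sq hw₀]
    exact one_ne_zero
  · exact (continuous_linearEigenfunction (w t₀)).continuousAt.comp hw
  · rw [linearEigenfunction_self hw₀]
    exact one_ne_zero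

/-- **Linear networks are unbiased to feature availability.** With the
linear-kernel prediction function `f`, its availability-rescaled version
`g_b`, and the normalized alignment `γ`, every sensitivity
`ζᵢ = (∂ᵐ/∂bᵢᵐ) γ |_{b=(1,1)}` vanishes for all `m ≥ 1`; in particular
`|ζ₁| − |ζ₂| = 0` for every `m ≥ 1`. -/
theorem linear_kernel_unbiased_sensitivity
    (a₁ a₂ μ₁ μ₂ : ℝ) (ha₁ : 0 < a₁) (ha₂ : 0 < a₂)
    (v : EuclideanSpace ℝ (Fin 2))
    (hv : v = (WithLp.equiv 2 (Fin 2 → ℝ)).symm ![a₁ * μ₁, a₂ * μ₂])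
    (hvne : v ≠ 0)
    (p : Measure (EuclideanSpace ℝ (Fin 2)))
    (hp : p = (1/2 : ℝ≥0∞) • Measure.dirac v + (1/2 : ℝ≥0∞) • Measure.dirac (-v))
    (φ : EuclideanSpace ℝ (Fin 2) → ℝ)
    (hφ : ∀ x, φ x = ⟪v, x⟫ / ‖v‖ ^ 2)
    (f : EuclideanSpace ℝ (Fin 2) → ℝ)
    (hf : ∀ x, f x = (1/2) * φ x * φ v)
    (g : ℝ → ℝ → EuclideanSpace ℝ (Fin 2) → ℝ)
    (hg : ∀ b₁ b₂ x, g b₁ b₂ x = (1/2) * φ x *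
      φ ((WithLp.equiv 2 (Fin 2 → ℝ)).symm ![b₁ * (a₁ * μ₁), b₂ * (a₂ * μ₂)]))
    (γ : ℝ → ℝ → ℝ)
    (hγ : ∀ b₁ b₂, γ b₁ b₂ = (∫ x, f x * g b₁ b₂ x ∂p) /
      (Real.sqrt (∫ x, (f x) ^ 2 ∂p) * Real.sqrt (∫ x, (g b₁ b₂ x) ^ 2 ∂p))) :
    ∀ m : ℕ, 1 ≤ m →
      iteratedDeriv m (fun t => γ t 1) 1 = 0 ∧
      iteratedDeriv m (fun t => γ 1 t) 1 = 0 ∧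
      |iteratedDeriv m (fun t => γ t 1) 1| -
        |iteratedDeriv m (fun t => γ 1 t) 1| = 0 := by
  intro m hm
  have hm₀ : m ≠ 0 := Nat.one_le_iff_ne_zero.mp hm
  let w (b₁ b₂ : ℝ) : EuclideanSpace ℝ (Fin 2) := !₂[b₁ * (a₁ * μ₁), b₂ * (a₂ * μ₂)]
  obtain rfl : v = w 1 1 := by simp [hv, w]
  have hγ_eq (b₁ b₂ : ℝ) : γ b₁ b₂ = alignment p
      (rankOnePrediction (linearEigenfunction (w 1 1)) (w 1 1))
      (rankOnePrediction (linearEigenfunction (w 1 1)) (w b₁ b₂)) := by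
    simp only [hγ, hf, hg, hφ]
    rfl
  have ζ₁ : iteratedDeriv m (fun t => γ t 1) 1 = 0 := by
    have hw : Continuous fun t => w t 1 := by fun_prop
    simpa only [hγ_eq, hp] using
      iteratedDeriv_alignment_linearEigenfunction hw.continuousAt hvne hm₀
  have ζ₂ : iteratedDeriv m (fun t => γ 1 t) 1 = 0 := by
    have hw : Continuous fun t => w 1 t := by fun_prop
    simpa only [hγ_eq, hp] using
      iteratedDeriv_alignment_linearEigenfunction hw.continuousAt hvne hm₀
  exact ⟨ζ₁, ζ₂, by rw [ζ₁, ζ₂, sub_self]⟩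
end
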